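/- Let p, q ∈ R be idempotents such that p - q is group invertible. Then p - q1 and q4 are group invertible and (p-q)*(p-q)^# = (p-q1)*(p-q1)^# + q4*q4^#; equivalently, the spectral idempotent satisfies (p-q)^π = (p-q1)^π + q4^π - 1. -/

import Mathlib

/-!
Write `a = p - q`. Then `a ^ 2` commutes with `p`, and its diagonal Peirce blocks relative to `p`
are `p * a ^ 2 = p - q1` and `(1 - p) * a ^ 2 = q4`. Since a group inverse lies in the double
commutant, group inverses of commuting elements multiply, and hence so do the projections
`x * x^#`. It follows that `a` and `a ^ 2` have the same projection; multiplying it by `p` and by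
`1 - p`, each of which is its own projection, splits it into the projections of the two blocks.
-/

variable {R : Type*} [Ring R]

/-- `c` is a group inverse of `a`. -/
def IsGroupInvOf (a c : R) : Prop := a * c * a = a ∧ c * a * c = c ∧ a * c = c * a

/-- `a` is group invertible. -/
def GroupInvertible (a : R) : Prop := ∃ c, IsGroupInvOf a c

/-- The group inverse `a^#` (junk value `0` if it does not exist). -/
noncomputable def gi (a : R) : R :=
  haveI := Classical.dec (GroupInvertible a)
  if h : GroupInvertible a then h.choose else 0

/-- The spectral idempotent `a^π = 1 - a * a^#`. -/
noncomputable def sp (a : R) : R := 1 - a * gi a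

section GroupInverse

variable {a b c d e x : R}

namespace IsGroupInvOf

theorem commute (h : IsGroupInvOf a c) : Commute a c := h.2.2

theorem commute_mul_of_commute (h : IsGroupInvOf a c) (hx : Commute x a) :
    Commute x (a * c) := by
  have hright : a * (a * c) = a := by rw [h.commute.eq, ← mul_assoc, h.1]
  have hcxa : c * (x * a) = a * c * x := by rw [hx.eq, ← mul_assoc, h.commute.eq]
  have haxc : a * x * c = x * (a * c) := by rw [← hx.eq, mul_assoc]
  calc x * (a * c) = a * c * a * x * c := by rw [h.1, haxc]
    _ = a * c * (a * x * c) := by simp only [mul_assoc]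
    _ = c * (x * a) * (a * c) := by rw [haxc, hcxa]; simp only [mul_assoc]
    _ = c * (x * (a * (a * c))) := by simp only [mul_assoc]
    _ = a * c * x := by rw [hright, hcxa]

theorem commute_of_commute (h : IsGroupInvOf a c) (hx : Commute x a) : Commute x c := by
  have hproj : Commute x (a * c) := h.commute_mul_of_commute hx
  calc x * c = x * (a * c) * c := by rw [h.commute.eq, mul_assoc, h.2.1]
    _ = c * (a * x) * c := by rw [hproj.eq, h.commute.eq, mul_assoc c]
    _ = c * (x * (a * c)) := by rw [← hx.eq]; simp only [mul_assoc]
    _ = c * x := by rw [hproj.eq, ← mul_assoc, ← mul_assoc, h.2.1]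

theorem unique (hc : IsGroupInvOf a c) (hd : IsGroupInvOf a d) : c = d := by
  have hproj : c * a = a * d := by
    calc c * a = c * a * (d * a) := by rw [mul_assoc, ← mul_assoc a, hd.1]
      _ = a * c * (a * d) := by rw [hc.commute.eq, hd.commute.eq]
      _ = a * d := by rw [← mul_assoc, hc.1]
  calc c = c * a * c := hc.2.1.symm
    _ = c * (a * d) := by rw [mul_assoc, hc.commute.eq, hproj]
    _ = a * d * d := by rw [← mul_assoc, hproj]
    _ = d := by rw [hd.commute.eq, hd.2.1]

theorem groupInvertible (h : IsGroupInvOf a c) : GroupInvertible a := ⟨c, h⟩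

theorem mul (hac : IsGroupInvOf a c) (hbd : IsGroupInvOf b d) (hab : Commute a b) :
    IsGroupInvOf (a * b) (c * d) := by
  have had : Commute a d := hbd.commute_of_commute hab
  have hbc : Commute b c := hac.commute_of_commute hab.symm
  have hcd : Commute c d := hbd.commute_of_commute hbc.symm
  refine ⟨?_, ?_, (hac.commute.mul_right had).mul_left (hbc.mul_right hbd.commute)⟩
  · rw [hbc.mul_mul_mul_comm, (hab.symm.mul_left had.symm).mul_mul_mul_comm, hac.1, hbd.1]
  · rw [had.symm.mul_mul_mul_comm, (hcd.symm.mul_left hbc).mul_mul_mul_comm, hac.2.1, hbd.2.1]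

theorem of_isIdempotentElem (he : IsIdempotentElem e) : IsGroupInvOf e e :=
  ⟨by rw [he.eq, he.eq], by rw [he.eq, he.eq], rfl⟩

end IsGroupInvOf

theorem GroupInvertible.isGroupInvOf_gi (h : GroupInvertible a) : IsGroupInvOf a (gi a) := by
  rw [gi, dif_pos h]
  exact h.choose_spec

theorem IsGroupInvOf.gi_eq (h : IsGroupInvOf a c) : gi a = c :=
  h.groupInvertible.isGroupInvOf_gi.unique h

theorem GroupInvertible.mul (ha : GroupInvertible a) (hb : GroupInvertible b) (hab : Commute a b) :
    GroupInvertible (a * b) :=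
  (ha.isGroupInvOf_gi.mul hb.isGroupInvOf_gi hab).groupInvertible

theorem GroupInvertible.sq (ha : GroupInvertible a) : GroupInvertible (a ^ 2) :=
  pow_two a ▸ ha.mul ha (Commute.refl a)

theorem GroupInvertible.of_isIdempotentElem (he : IsIdempotentElem e) : GroupInvertible e :=
  (IsGroupInvOf.of_isIdempotentElem he).groupInvertible

theorem GroupInvertible.isIdempotentElem_mul_gi (h : GroupInvertible a) :
    IsIdempotentElem (a * gi a) := by
  rw [IsIdempotentElem, ← mul_assoc, h.isGroupInvOf_gi.1]

theorem mul_gi_of_isIdempotentElem (he : IsIdempotentElem e) : e * gi e = e := by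
  rw [(IsGroupInvOf.of_isIdempotentElem he).gi_eq, he.eq]

theorem mul_gi_mul (ha : GroupInvertible a) (hb : GroupInvertible b) (hab : Commute a b) :
    a * b * gi (a * b) = a * gi a * (b * gi b) := by
  rw [(ha.isGroupInvOf_gi.mul hb.isGroupInvOf_gi hab).gi_eq,
    (ha.isGroupInvOf_gi.commute_of_commute hab.symm).mul_mul_mul_comm]

theorem sq_mul_gi_sq (ha : GroupInvertible a) : a ^ 2 * gi (a ^ 2) = a * gi a := by
  rw [sq, mul_gi_mul ha ha (Commute.refl a), ha.isIdempotentElem_mul_gi.eq]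

theorem mul_gi_eq_add_of_commute (hb : GroupInvertible b) (he : IsIdempotentElem e)
    (heb : Commute e b) :
    b * gi b = e * b * gi (e * b) + (1 - e) * b * gi ((1 - e) * b) := by
  have heb' : Commute (1 - e) b := (Commute.one_left b).sub_left heb
  rw [mul_gi_mul (.of_isIdempotentElem he) hb heb,
    mul_gi_mul (.of_isIdempotentElem he.one_sub) hb heb',
    mul_gi_of_isIdempotentElem he, mul_gi_of_isIdempotentElem he.one_sub,
    ← add_mul, add_sub_cancel, one_mul]

end GroupInverse

section TwoIdempotents

variable {p q : R}

theorem mul_sub_sq_of_isIdempotentElem (hp : IsIdempotentElem p) (hq : IsIdempotentElem q) :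
    p * (p - q) ^ 2 = p - p * q * p := by
  simp only [sq, mul_sub, sub_mul, hp.eq, hq.eq, ← mul_assoc]
  abel

theorem sub_sq_mul_of_isIdempotentElem (hp : IsIdempotentElem p) (hq : IsIdempotentElem q) :
    (p - q) ^ 2 * p = p - p * q * p := by
  simp only [sq, mul_sub, sub_mul, hp.eq, hq.eq, mul_assoc]
  abel

theorem one_sub_mul_sub_sq_of_isIdempotentElem (hp : IsIdempotentElem p)
    (hq : IsIdempotentElem q) :
    (1 - p) * (p - q) ^ 2 = (1 - p) * q * (1 - p) := by
  simp only [sq, mul_sub, sub_mul, one_mul, mul_one, hp.eq, hq.eq, ← mul_assoc]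
  abel

theorem commute_sub_sq_of_isIdempotentElem (hp : IsIdempotentElem p) (hq : IsIdempotentElem q) :
    Commute p ((p - q) ^ 2) :=
  (mul_sub_sq_of_isIdempotentElem hp hq).trans (sub_sq_mul_of_isIdempotentElem hp hq).symm

end TwoIdempotents

theorem spectral_idem_p_sub_q (p q q1 q2 q3 q4 : R) (hp : p * p = p) (hq : q * q = q)
    (h1 : q1 = p * q * p) (h2 : q2 = p * q * (1 - p))
    (h3 : q3 = (1 - p) * q * p) (h4 : q4 = (1 - p) * q * (1 - p))
    (hpq : GroupInvertible (p - q)) :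
    GroupInvertible (p - q1) ∧ GroupInvertible q4 ∧
      (p - q) * gi (p - q) = (p - q1) * gi (p - q1) + q4 * gi q4 ∧
      sp (p - q) = sp (p - q1) + sp q4 - 1 := by
  replace hp : IsIdempotentElem p := hp
  have hsq : GroupInvertible ((p - q) ^ 2) := hpq.sq
  have hcomm : Commute p ((p - q) ^ 2) := commute_sub_sq_of_isIdempotentElem hp hq
  have hblock : p * (p - q) ^ 2 = p - q1 := h1 ▸ mul_sub_sq_of_isIdempotentElem hp hq
  have hblock' : (1 - p) * (p - q) ^ 2 = q4 :=
    h4 ▸ one_sub_mul_sub_sq_of_isIdempotentElem hp hq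
  have hsum : (p - q) * gi (p - q) = (p - q1) * gi (p - q1) + q4 * gi q4 := by
    rw [← sq_mul_gi_sq hpq, mul_gi_eq_add_of_commute hsq hp hcomm, hblock, hblock']
  refine ⟨?_, ?_, hsum, ?_⟩
  · exact hblock ▸ GroupInvertible.mul (.of_isIdempotentElem hp) hsq hcomm
  · exact hblock' ▸ GroupInvertible.mul (.of_isIdempotentElem hp.one_sub) hsq
      ((Commute.one_left _).sub_left hcomm)
  · rw [sp, sp, sp, hsum]
    abel
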